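/- Let K ≥ 1, n ≥ 1, and let A_1, …, A_K be n×n complex matrices, each with determinant 1. Then for every ε > 0 there exist an integer N ≥ 1, an integer m with m ≥ (1−ε)·nN, and K+1 matrices U_1, …, U_K, V of size nN × m with orthonormal columns, such that for every i = 1, …, K the m×m matrix U_iᴴ (I_N ⊗ A_i) V is upper triangular with all diagonal entries equal to 1. -/

import Mathlib

open Matrix Kronecker

theorem qr_exists {n : ℕ} (X : Matrix (Fin n) (Fin n) ℂ) :
    ∃ U : Matrix (Fin n) (Fin n) ℂ, Uᴴ * U = 1 ∧ ∀ i j, j < i → (Uᴴ * X) i j = 0 := by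
  have h : Module.finrank ℂ (EuclideanSpace ℂ (Fin n)) = Fintype.card (Fin n) := by simp
  let f : Fin n → EuclideanSpace ℂ (Fin n) := fun j => WithLp.toLp 2 (fun a => X a j)
  let b := InnerProductSpace.gramSchmidtOrthonormalBasis h f
  refine ⟨Matrix.of fun a j => b j a, ?_, ?_⟩
  · ext i j
    have := orthonormal_iff_ite.1 b.orthonormal i j
    rw [PiLp.inner_apply] at this
    simp only [Matrix.mul_apply, conjTranspose_apply, Matrix.of_apply, Matrix.one_apply]
    rw [← this]
    refine Finset.sum_congr rfl fun a _ => ?_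
    simp [mul_comm]
  · intro i j hij
    have := InnerProductSpace.inner_gramSchmidtOrthonormalBasis_eq_zero h (f := f) (i := i) (j := j)
    have h2 : inner ℂ (b i) (f j) = 0 := InnerProductSpace.gramSchmidtOrthonormalBasis_inv_triangular h f hij
    rw [PiLp.inner_apply] at h2
    simp only [Matrix.mul_apply, conjTranspose_apply, Matrix.of_apply]
    rw [← h2]
    refine Finset.sum_congr rfl fun a _ => ?_
    simp [f, mul_comm]

theorem norm_det_of_unitary {n : ℕ} {U : Matrix (Fin n) (Fin n) ℂ} (h : Uᴴ * U = 1) : ‖U.det‖ = 1 := by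
  have := congrArg Matrix.det h
  rw [det_mul, det_conjTranspose, det_one] at this
  have h2 := congrArg norm this
  rw [norm_mul, norm_star, norm_one] at h2
  nlinarith [norm_nonneg U.det]

open ComplexOrder in
theorem exists_unit_vec {n : ℕ} (X : Matrix (Fin (n+1)) (Fin (n+1)) ℂ) (hX : ‖X.det‖ = 1) :
    ∃ v : Fin (n+1) → ℂ, star v ⬝ᵥ v = 1 ∧ star v ⬝ᵥ ((Xᴴ * X) *ᵥ v) = 1 := by
  have hP : (Xᴴ * X).IsHermitian := isHermitian_conjTranspose_mul_self X
  have hpos : (Xᴴ * X).PosSemidef := posSemidef_conjTranspose_mul_self X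
  have hnn := hpos.eigenvalues_nonneg
  have hdet : ∏ i, hP.eigenvalues i = 1 := by
    have h1 := hP.det_eq_prod_eigenvalues
    have h2 := congrArg norm h1
    rw [det_mul, det_conjTranspose, norm_mul, norm_star, hX, norm_prod] at h2
    rw [one_mul] at h2
    rw [h2]
    refine Finset.prod_congr rfl fun i _ => ?_
    simp [abs_of_nonneg (hnn i)]
  obtain ⟨a, ha⟩ : ∃ a, hP.eigenvalues a ≤ 1 := by
    by_contra! h
    have : 1 < ∏ i, hP.eigenvalues i := by
      have := Finset.prod_lt_prod_of_nonempty (s := Finset.univ) (f := fun _ : Fin (n+1) => (1:ℝ)) (g := hP.eigenvalues) (by simp) (fun i _ => h i) Finset.univ_nonempty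
      simpa using this
    linarith
  obtain ⟨b, hb⟩ : ∃ a, 1 ≤ hP.eigenvalues a := by
    by_contra! h
    by_cases h0 : ∀ i, 0 < hP.eigenvalues i
    · have := Finset.prod_lt_prod_of_nonempty (s := Finset.univ) (g := fun _ : Fin (n+1) => (1:ℝ)) (f := hP.eigenvalues) (fun i _ => h0 i) (fun i _ => h i) Finset.univ_nonempty
      simp at this
      linarith
    · push Not at h0
      obtain ⟨i, hi⟩ := h0
      rw [Finset.prod_eq_zero (Finset.mem_univ i) (le_antisymm hi (hnn i))] at hdet
      norm_num at hdet
  have horth : ∀ i j, star (hP.eigenvectorBasis i : Fin (n+1) → ℂ) ⬝ᵥ (hP.eigenvectorBasis j : Fin (n+1) → ℂ) = if i = j then 1 else 0 := by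
    intro i j
    have := orthonormal_iff_ite.1 hP.eigenvectorBasis.orthonormal i j
    rw [PiLp.inner_apply] at this
    rw [← this]
    refine Finset.sum_congr rfl fun a _ => ?_
    simp [mul_comm]
  have hev := hP.mulVec_eigenvectorBasis
  by_cases hab : hP.eigenvalues a = 1
  · refine ⟨hP.eigenvectorBasis a, by simp [horth], ?_⟩
    rw [hev, hab]; simp [horth]
  · have hlt : hP.eigenvalues a < hP.eigenvalues b := lt_of_lt_of_le (lt_of_le_of_ne ha hab) hb
    have hne : a ≠ b := by rintro rfl; exact lt_irrefl _ hlt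
    set la := hP.eigenvalues a
    set lb := hP.eigenvalues b
    let t : ℝ := (1 - la) / (lb - la)
    have ht0 : 0 ≤ t := div_nonneg (by linarith) (by linarith)
    have ht1 : t ≤ 1 := by rw [div_le_one (by linarith)]; linarith
    have hx : ((√(1 - t) : ℝ) : ℂ) * ((√(1-t) : ℝ) : ℂ) = 1 - t := by
      rw [← Complex.ofReal_mul, Real.mul_self_sqrt (by linarith)]; simp
    have hy : ((√t : ℝ) : ℂ) * ((√t : ℝ) : ℂ) = t := by
      rw [← Complex.ofReal_mul, Real.mul_self_sqrt (by linarith)]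
    have hxs : star ((√(1 - t) : ℝ) : ℂ) = ((√(1 - t) : ℝ) : ℂ) := Complex.conj_ofReal _
    have hys : star ((√t : ℝ) : ℂ) = ((√t : ℝ) : ℂ) := Complex.conj_ofReal _
    generalize ((√(1 - t) : ℝ) : ℂ) = x at *
    generalize ((√t : ℝ) : ℂ) = y at *
    have key : (1 - (t:ℂ)) * la + t * lb = 1 := by
      have : (1 - t) * la + t * lb = 1 := by
        have : t * (lb - la) = 1 - la := div_mul_cancel₀ _ (by linarith)
        linarith
      exact_mod_cast this
    refine ⟨x • (hP.eigenvectorBasis a : Fin (n+1) → ℂ) + y • (hP.eigenvectorBasis b : Fin (n+1) → ℂ), ?_, ?_⟩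
    · simp only [star_add, star_smul, add_dotProduct, dotProduct_add, smul_dotProduct, dotProduct_smul, horth, hxs, hys]
      simp [hne, hne.symm]
      linear_combination hx + hy
    · rw [mulVec_add, mulVec_smul, mulVec_smul, hev, hev]
      simp only [star_add, star_smul, add_dotProduct, dotProduct_add, smul_dotProduct, dotProduct_smul, horth, hxs, hys]
      simp [hne, hne.symm]
      linear_combination key + la * hx + lb * hy

theorem exists_unitary_col {n : ℕ} (v : Fin (n+1) → ℂ) (hv : star v ⬝ᵥ v = 1) :
    ∃ V : Matrix (Fin (n+1)) (Fin (n+1)) ℂ, Vᴴ * V = 1 ∧ ∀ a, V a 0 = v a := by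
  have h : Module.finrank ℂ (EuclideanSpace ℂ (Fin (n+1))) = Fintype.card (Fin (n+1)) := by simp
  obtain ⟨b, hb⟩ := Orthonormal.exists_orthonormalBasis_extension_of_card_eq (𝕜 := ℂ) h
    (v := fun _ => (WithLp.toLp 2 v : EuclideanSpace ℂ (Fin (n+1)))) (s := {0}) (by
      rw [orthonormal_iff_ite]
      rintro ⟨i, hi⟩ ⟨j, hj⟩
      simp only [Set.mem_singleton_iff] at hi hj
      subst hi; subst hj
      simp only [Set.domRestrict_apply, if_true]
      rw [PiLp.inner_apply, ← hv]
      refine Finset.sum_congr rfl fun a _ => ?_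
      rw [RCLike.inner_apply, mul_comm]
      rfl)
  refine ⟨Matrix.of fun a j => b j a, ?_, ?_⟩
  · ext i j
    have := orthonormal_iff_ite.1 b.orthonormal i j
    rw [PiLp.inner_apply] at this
    simp only [Matrix.mul_apply, conjTranspose_apply, Matrix.of_apply, Matrix.one_apply]
    rw [← this]
    refine Finset.sum_congr rfl fun a _ => ?_
    simp [mul_comm]
  · intro a
    simp [hb 0 rfl]

def extM {n : ℕ} (c : ℂ) (M : Matrix (Fin n) (Fin n) ℂ) : Matrix (Fin (n+1)) (Fin (n+1)) ℂ :=
  Matrix.of (Fin.cons (Fin.cons c 0) (fun i => Fin.cons 0 (M i)))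

theorem extM_unitary {n : ℕ} (c : ℂ) (hc : star c * c = 1) (M : Matrix (Fin n) (Fin n) ℂ)
    (hM : Mᴴ * M = 1) : (extM c M)ᴴ * extM c M = 1 := by
  ext i j
  have h := fun i j => congrFun (congrFun hM i) j
  simp only [Matrix.mul_apply, conjTranspose_apply] at h
  refine Fin.cases ?_ (fun i => ?_) i <;> refine Fin.cases ?_ (fun j => ?_) j
  · simpa [Matrix.mul_apply, Fin.sum_univ_succ, extM] using hc
  · simp [Matrix.mul_apply, Fin.sum_univ_succ, extM, (Fin.succ_ne_zero _).symm]
  · simp [Matrix.mul_apply, Fin.sum_univ_succ, extM]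
  · simpa [Matrix.mul_apply, Fin.sum_univ_succ, extM, Matrix.one_apply] using h i j

theorem gmd_exists : ∀ (n : ℕ) (X : Matrix (Fin n) (Fin n) ℂ), ‖X.det‖ = 1 →
    ∃ U V : Matrix (Fin n) (Fin n) ℂ, Uᴴ * U = 1 ∧ Vᴴ * V = 1 ∧
      (∀ i j, j < i → (Uᴴ * X * V) i j = 0) ∧ ∀ i, (Uᴴ * X * V) i i = 1 := by
  intro n
  induction n with
  | zero => intro X _; exact ⟨1, 1, by simp, by simp, fun i => i.elim0, fun i => i.elim0⟩
  | succ n ih =>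
    intro X hX
    obtain ⟨v, hv, hXv⟩ := exists_unit_vec X hX
    obtain ⟨V, hV, hVv⟩ := exists_unitary_col v hv
    obtain ⟨U, hU, hT⟩ := qr_exists (X * V)
    rw [← Matrix.mul_assoc] at hT
    have hUU : U * Uᴴ = 1 := mul_eq_one_comm.1 hU
    set Y := Uᴴ * X * V with hY
    have h00 : star (Y 0 0) * Y 0 0 = 1 := by
      have e1 : Yᴴ * Y = Vᴴ * (Xᴴ * X) * V := by
        rw [hY]
        simp only [conjTranspose_mul, conjTranspose_conjTranspose]
        calc Vᴴ * (Xᴴ * U) * (Uᴴ * X * V) = Vᴴ * (Xᴴ * (U * Uᴴ) * X) * V := by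
              simp only [Matrix.mul_assoc]
          _ = _ := by rw [hUU, Matrix.mul_one]
      have e2 := congrFun (congrFun e1 0) 0
      have e3 : (Yᴴ * Y) 0 0 = star (Y 0 0) * Y 0 0 := by
        rw [Matrix.mul_apply, Fin.sum_univ_succ]
        simp [hT]
      rw [← e3, e2, ← hXv, Matrix.mul_assoc]
      have : V.col 0 = v := funext hVv
      simp only [Matrix.mul_apply, dotProduct, mulVec, conjTranspose_apply, hVv, Pi.star_apply]
    have hn00 : ‖Y 0 0‖ = 1 := by
      have := congrArg norm h00
      rw [norm_mul, norm_star, norm_one] at this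
      nlinarith [norm_nonneg (Y 0 0)]
    have hYd : ‖Y.det‖ = 1 := by
      rw [hY, det_mul, det_mul, det_conjTranspose, norm_mul, norm_mul, norm_star, norm_det_of_unitary hU, norm_det_of_unitary hV, hX]; simp
    have hYd' : ‖(Y.submatrix Fin.succ Fin.succ).det‖ = 1 := by
      have : Y.det = Y 0 0 * (Y.submatrix Fin.succ Fin.succ).det := by
        rw [det_of_isUpperTriangular (M := Y) (fun i j h => hT i j h), det_of_isUpperTriangular (M := Y.submatrix Fin.succ Fin.succ) (fun i j h => hT _ _ (Fin.succ_lt_succ_iff.2 h)), Fin.prod_univ_succ]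
        simp
      rw [this, norm_mul, hn00, one_mul] at hYd
      exact hYd
    obtain ⟨U', V', hU', hV', hT', hD'⟩ := ih _ hYd'
    have hfin : (U * extM (Y 0 0) U')ᴴ * X * (V * extM 1 V') = (extM (Y 0 0) U')ᴴ * Y * extM 1 V' := by
      rw [hY]; simp only [conjTranspose_mul, Matrix.mul_assoc]
    have hE : ∀ i j, ((extM (Y 0 0) U')ᴴ * Y * extM 1 V') (Fin.succ i) (Fin.succ j) = (U'ᴴ * (Y.submatrix Fin.succ Fin.succ) * V') i j := by
      intro i j
      simp [Matrix.mul_apply, Fin.sum_univ_succ, extM]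
    have hE0 : ∀ i, ((extM (Y 0 0) U')ᴴ * Y * extM 1 V') (Fin.succ i) 0 = 0 := by
      intro i
      simp [Matrix.mul_apply, Fin.sum_univ_succ, extM, hT]
    have hE00 : ((extM (Y 0 0) U')ᴴ * Y * extM 1 V') 0 0 = 1 := by
      have h01 : (starRingEnd ℂ) (Y 0 0) * Y 0 0 = 1 := h00
      simp [Matrix.mul_apply, Fin.sum_univ_succ, extM, h01]
    refine ⟨U * extM (Y 0 0) U', V * extM 1 V', ?_, ?_, ?_, ?_⟩
    · have := extM_unitary _ h00 U' hU'
      rw [conjTranspose_mul, Matrix.mul_assoc, ← Matrix.mul_assoc Uᴴ, hU, Matrix.one_mul, this]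
    · have := extM_unitary 1 (by simp) V' hV'
      rw [conjTranspose_mul, Matrix.mul_assoc, ← Matrix.mul_assoc Vᴴ, hV, Matrix.one_mul, this]
    · rw [hfin]
      intro i j
      refine Fin.cases ?_ (fun i => ?_) i <;> refine Fin.cases ?_ (fun j => ?_) j
      · simp
      · simp
      · intro _; exact hE0 i
      · intro h; rw [hE]; exact hT' _ _ (Fin.succ_lt_succ_iff.1 h)
    · rw [hfin]
      intro i
      refine Fin.cases hE00 (fun i => ?_) i
      rw [hE]; exact hD' i

/-- Intermediate state: the first `k` matrices have unit diagonals, the others have a diagonal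
that repeats in each of the `M` blocks, with product of modulus one over a block. -/
def Good {K n : ℕ} {ρ : Type} [Fintype ρ] (B : Fin K → Matrix ρ ρ ℂ) (k M : ℕ) : Prop :=
  ∃ (U : Fin K → Matrix ρ (Fin M × Fin n) ℂ) (V : Matrix ρ (Fin M × Fin n) ℂ)
    (d : Fin K → Fin n → ℂ),
    (∀ i, (U i)ᴴ * U i = 1) ∧ Vᴴ * V = 1 ∧ (∀ i, ‖∏ r, d i r‖ = 1) ∧
    (∀ i : Fin K, i.val < k → ∀ r, d i r = 1) ∧
    ∀ i s r s' r', (s' < s → ((U i)ᴴ * B i * V) (s, r) (s', r') = 0) ∧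
      (r' < r → ((U i)ᴴ * B i * V) (s, r) (s, r') = 0) ∧
      ((U i)ᴴ * B i * V) (s, r) (s, r) = d i r

theorem Good.reindex {K n : ℕ} {ρ σ : Type} [Fintype ρ] [Fintype σ]
    {B : Fin K → Matrix ρ ρ ℂ} {k M : ℕ} (e : σ ≃ ρ) (h : Good (n := n) B k M) :
    Good (n := n) (fun i => (B i).submatrix e e) k M := by
  obtain ⟨U, V, d, hU, hV, hd, hk, hT⟩ := h
  have key : ∀ i, ((U i).submatrix e id)ᴴ * (B i).submatrix e e * V.submatrix e id
      = (U i)ᴴ * B i * V := by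
    intro i
    rw [conjTranspose_submatrix, submatrix_mul_equiv, submatrix_mul_equiv, submatrix_id_id]
  refine ⟨fun i => (U i).submatrix e id, V.submatrix e id, d, ?_, ?_, hd, hk, ?_⟩
  · intro i
    rw [conjTranspose_submatrix, submatrix_mul_equiv, submatrix_id_id, hU]
  · rw [conjTranspose_submatrix, submatrix_mul_equiv, submatrix_id_id, hV]
  · simpa only [key] using hT

theorem block_entry {n M : ℕ} (P Q : Matrix (Fin n) (Fin n) ℂ)
    (R : Matrix (Fin M × Fin n) (Fin M × Fin n) ℂ) (s s' : Fin M) (r r' : Fin n) :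
    (((1 : Matrix (Fin M) (Fin M) ℂ) ⊗ₖ P)ᴴ * R * ((1 : Matrix (Fin M) (Fin M) ℂ) ⊗ₖ Q)) (s, r) (s', r')
      = (Pᴴ * (Matrix.of fun q q' => R (s, q) (s', q')) * Q) r r' := by
  simp only [Matrix.mul_apply, conjTranspose_apply, kroneckerMap_apply, Fintype.sum_prod_type,
    Matrix.one_apply, Matrix.of_apply]
  rw [Finset.sum_eq_single s']
  · refine Finset.sum_congr rfl fun q' _ => ?_
    rw [Finset.sum_eq_single s]
    · simp
    · intro b _ hb; simp [hb]
    · simp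
  · intro b _ hb; simp [hb]
  · simp

/-- Choice of the entry `(copy, block, residue)` that goes to position `(s, r)`. -/
def sel (n p : ℕ) (x : Fin (n * p + 1) × Fin n) : Fin n × (Fin (p + 1) × Fin n) :=
  (⟨(x.1.val + (n - 1 - x.2.val)) % n, Nat.mod_lt _ (Nat.zero_lt_of_lt x.2.2)⟩,
   (⟨(x.1.val + (n - 1 - x.2.val)) / n, by
      have h1 := x.1.2
      have h2 := x.2.2
      rw [Nat.div_lt_iff_lt_mul (by omega)]
      have : (p + 1) * n = n * p + n := by ring
      omega⟩, x.2))

theorem sel_spec (n p : ℕ) (x : Fin (n * p + 1) × Fin n) :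
    n * (sel n p x).2.1.val + (sel n p x).1.val + (sel n p x).2.2.val + 1 = x.1.val + n := by
  have h := Nat.div_add_mod (x.1.val + (n - 1 - x.2.val)) n
  have h2 := x.2.2
  simp only [sel]
  omega

theorem sel_inj (n p : ℕ) : Function.Injective (sel n p) := by
  rintro ⟨s, r⟩ ⟨s', r'⟩ h
  have h1 := sel_spec n p (s, r)
  have h2 := sel_spec n p (s', r')
  rw [h, h2] at h1
  have h3 : r = r' := congrArg (fun z => z.2.2) h
  ext
  · simp at h1 ⊢; omega
  · simp [h3]

theorem kron_unitary {α β γ : Type} [Fintype α] [Fintype β] [Fintype γ] [DecidableEq α]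
    [DecidableEq γ] {X : Matrix β γ ℂ} (h : Xᴴ * X = 1) :
    ((1 : Matrix α α ℂ) ⊗ₖ X)ᴴ * ((1 : Matrix α α ℂ) ⊗ₖ X) = 1 := by
  rw [conjTranspose_kronecker, ← mul_kronecker_mul, h]; simp

theorem Good.step {K n : ℕ} {ρ : Type} [Fintype ρ]
    {B : Fin K → Matrix ρ ρ ℂ} {k p : ℕ} (hkK : k < K) (h : Good (n := n) B k (p + 1)) :
    Good (n := n) (fun i => (1 : Matrix (Fin n) (Fin n) ℂ) ⊗ₖ B i) (k + 1) (n * p + 1) := by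
  obtain ⟨U, V, d, hU, hV, hd, hk, hT⟩ := h
  have hdd : ∀ i, ‖(diagonal (d i)).det‖ = 1 := fun i => by rw [det_diagonal]; exact hd i
  obtain ⟨U₀, V₀, hU₀, hV₀, hT₀, hD₀⟩ := gmd_exists n (diagonal (d ⟨k, hkK⟩)) (hdd _)
  have hW : ∀ i : Fin K, ∃ W : Matrix (Fin n) (Fin n) ℂ, Wᴴ * W = 1 ∧
      (∀ a b, b < a → (Wᴴ * diagonal (d i) * V₀) a b = 0) ∧
      (i.val < k + 1 → ∀ a, (Wᴴ * diagonal (d i) * V₀) a a = 1) := by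
    intro i
    rcases lt_trichotomy i.val k with hi | hi | hi
    · have : diagonal (d i) = 1 := by
        rw [show d i = fun _ => 1 from funext (hk i hi)]; exact diagonal_one
      refine ⟨V₀, hV₀, ?_, ?_⟩
      · intro a b hab
        rw [this, Matrix.mul_one, hV₀, one_apply_ne hab.ne']
      · intro _ a
        rw [this, Matrix.mul_one, hV₀, one_apply_eq]
    · obtain rfl : i = ⟨k, hkK⟩ := Fin.ext hi
      exact ⟨U₀, hU₀, hT₀, fun _ => hD₀⟩
    · obtain ⟨W, hW, hW'⟩ := qr_exists (diagonal (d i) * V₀)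
      refine ⟨W, hW, ?_, fun h => by omega⟩
      rwa [← Matrix.mul_assoc] at hW'
  choose W hWu hWt hWd using hW
  let X : Fin K → Matrix (Fin n × ρ) (Fin (n * p + 1) × Fin n) ℂ :=
    fun i => ((1 : Matrix (Fin n) (Fin n) ℂ) ⊗ₖ U i).submatrix id (sel n p)
  let Y : Matrix (Fin n × ρ) (Fin (n * p + 1) × Fin n) ℂ :=
    ((1 : Matrix (Fin n) (Fin n) ℂ) ⊗ₖ V).submatrix id (sel n p)
  have hX : ∀ i, (X i)ᴴ * X i = 1 := by
    intro i
    simp only [X]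
    rw [conjTranspose_submatrix, ← submatrix_mul _ _ _ _ _ Function.bijective_id,
      kron_unitary (hU i), submatrix_one _ (sel_inj n p)]
  have hY : Yᴴ * Y = 1 := by
    simp only [Y]
    rw [conjTranspose_submatrix, ← submatrix_mul _ _ _ _ _ Function.bijective_id,
      kron_unitary hV, submatrix_one _ (sel_inj n p)]
  have hR : ∀ i, (X i)ᴴ * ((1 : Matrix (Fin n) (Fin n) ℂ) ⊗ₖ B i) * Y
      = ((1 : Matrix (Fin n) (Fin n) ℂ) ⊗ₖ ((U i)ᴴ * B i * V)).submatrix (sel n p) (sel n p) := by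
    intro i
    have : (1 : Matrix (Fin n) (Fin n) ℂ) ⊗ₖ ((U i)ᴴ * B i * V)
      = ((1 : Matrix (Fin n) (Fin n) ℂ) ⊗ₖ U i)ᴴ * ((1 : Matrix (Fin n) (Fin n) ℂ) ⊗ₖ B i)
        * ((1 : Matrix (Fin n) (Fin n) ℂ) ⊗ₖ V) := by
      rw [conjTranspose_kronecker, ← mul_kronecker_mul, ← mul_kronecker_mul]; simp
    rw [this, submatrix_mul _ _ _ id _ Function.bijective_id,
      submatrix_mul _ _ _ id _ Function.bijective_id, submatrix_id_id]
    rfl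
  have hlow : ∀ i s s', s' < s → (Matrix.of fun q q' =>
      ((X i)ᴴ * ((1 : Matrix (Fin n) (Fin n) ℂ) ⊗ₖ B i) * Y) (s, q) (s', q')) = 0 := by
    intro i s s' hs
    ext q q'
    rw [hR]
    simp only [Matrix.of_apply, submatrix_apply, kroneckerMap_apply, Matrix.zero_apply]
    by_cases hc : (sel n p (s, q)).1 = (sel n p (s', q')).1
    · rw [hc, one_apply_eq, one_mul]
      have h1 := sel_spec n p (s, q)
      have h2 := sel_spec n p (s', q')
      have h3 := (sel n p (s, q)).2.2.2
      have h4 := (sel n p (s', q')).2.2.2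
      rw [hc] at h1
      have hs' : s'.val < s.val := hs
      generalize (sel n p (s, q)).2 = z at *
      generalize (sel n p (s', q')).2 = z' at *
      obtain ⟨b, r⟩ := z
      obtain ⟨b', r'⟩ := z'
      simp only at h1 h2 h3 h4
      rcases lt_trichotomy b' b with hb | hb | hb
      · exact (hT i b r b' r').1 hb
      · subst hb
        refine (hT i b' r b' r').2.1 ?_
        rw [Fin.lt_def]; omega
      · exfalso
        have : n * (b.val + 1) ≤ n * b'.val := Nat.mul_le_mul_left _ hb
        rw [Nat.mul_add] at this
        omega
    · rw [one_apply_ne hc, zero_mul]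
  have hdiag : ∀ i s, (Matrix.of fun q q' =>
      ((X i)ᴴ * ((1 : Matrix (Fin n) (Fin n) ℂ) ⊗ₖ B i) * Y) (s, q) (s, q')) = diagonal (d i) := by
    intro i s
    ext q q'
    rw [hR]
    simp only [Matrix.of_apply, submatrix_apply, kroneckerMap_apply]
    by_cases hqq : q = q'
    · subst hqq
      rw [one_apply_eq, one_mul, diagonal_apply_eq]
      exact (hT i (sel n p (s, q)).2.1 q (sel n p (s, q)).2.1 q).2.2
    · rw [diagonal_apply_ne _ hqq]
      by_cases hc : (sel n p (s, q)).1 = (sel n p (s, q')).1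
      · exfalso
        apply hqq
        have h1 := sel_spec n p (s, q)
        have h2 := sel_spec n p (s, q')
        have e1 : (sel n p (s, q)).2.2 = q := rfl
        have e2 : (sel n p (s, q')).2.2 = q' := rfl
        rw [hc] at h1
        rw [e1] at h1
        rw [e2] at h2
        have h3 := q.2
        have h4 := q'.2
        simp only at h1 h2
        generalize (sel n p (s, q)).2.1 = b at h1
        generalize (sel n p (s, q')).2.1 = b' at h2
        rcases lt_trichotomy b.val b'.val with hb | hb | hb
        · have : n * (b.val + 1) ≤ n * b'.val := Nat.mul_le_mul_left _ hb
          rw [Nat.mul_add] at this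
          omega
        · rw [hb] at h1
          ext; omega
        · have : n * (b'.val + 1) ≤ n * b.val := Nat.mul_le_mul_left _ hb
          rw [Nat.mul_add] at this
          omega
      · rw [one_apply_ne hc, zero_mul]
  have hfin : ∀ i, (X i * ((1 : Matrix (Fin (n * p + 1)) (Fin (n * p + 1)) ℂ) ⊗ₖ W i))ᴴ
      * ((1 : Matrix (Fin n) (Fin n) ℂ) ⊗ₖ B i) *
      (Y * ((1 : Matrix (Fin (n * p + 1)) (Fin (n * p + 1)) ℂ) ⊗ₖ V₀))
      = ((1 : Matrix (Fin (n * p + 1)) (Fin (n * p + 1)) ℂ) ⊗ₖ W i)ᴴ *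
        ((X i)ᴴ * ((1 : Matrix (Fin n) (Fin n) ℂ) ⊗ₖ B i) * Y) *
        ((1 : Matrix (Fin (n * p + 1)) (Fin (n * p + 1)) ℂ) ⊗ₖ V₀) := by
    intro i; rw [conjTranspose_mul]; simp only [Matrix.mul_assoc]
  refine ⟨fun i => X i * ((1 : Matrix (Fin (n * p + 1)) (Fin (n * p + 1)) ℂ) ⊗ₖ W i),
    Y * ((1 : Matrix (Fin (n * p + 1)) (Fin (n * p + 1)) ℂ) ⊗ₖ V₀),
    fun i r => ((W i)ᴴ * diagonal (d i) * V₀) r r, ?_, ?_, ?_, hWd, ?_⟩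
  · intro i
    rw [conjTranspose_mul, Matrix.mul_assoc, ← Matrix.mul_assoc (X i)ᴴ, hX, Matrix.one_mul,
      kron_unitary (hWu i)]
  · rw [conjTranspose_mul, Matrix.mul_assoc, ← Matrix.mul_assoc Yᴴ, hY, Matrix.one_mul,
      kron_unitary hV₀]
  · intro i
    rw [← det_of_isUpperTriangular (fun a b h => hWt i a b h), det_mul, det_mul,
      det_conjTranspose, norm_mul, norm_mul, norm_star, norm_det_of_unitary (hWu i),
      norm_det_of_unitary hV₀, hdd]
    simp
  · intro i s r s' r'
    simp only [hfin, block_entry]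
    refine ⟨fun hs => ?_, fun hr => ?_, ?_⟩
    · rw [hlow i s s' hs]; simp
    · rw [hdiag]; exact hWt i _ _ hr
    · rw [hdiag]

theorem Good.base {K n : ℕ} (A : Fin K → Matrix (Fin n) (Fin n) ℂ) (hdet : ∀ i, (A i).det = 1)
    (M : ℕ) : Good (n := n) (fun i => (1 : Matrix (Fin M) (Fin M) ℂ) ⊗ₖ A i) 0 M := by
  choose Q hQ hT using fun i => qr_exists (A i)
  have key : ∀ i, ((1 : Matrix (Fin M) (Fin M) ℂ) ⊗ₖ Q i)ᴴ * ((1 : Matrix (Fin M) (Fin M) ℂ) ⊗ₖ A i)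
      * 1 = (1 : Matrix (Fin M) (Fin M) ℂ) ⊗ₖ ((Q i)ᴴ * A i) := by
    intro i
    rw [Matrix.mul_one, conjTranspose_kronecker, ← mul_kronecker_mul]; simp
  refine ⟨fun i => (1 : Matrix (Fin M) (Fin M) ℂ) ⊗ₖ Q i, 1, fun i r => ((Q i)ᴴ * A i) r r,
    fun i => kron_unitary (hQ i), by simp, ?_, by simp, ?_⟩
  · intro i
    rw [← det_of_isUpperTriangular (fun a b h => hT i a b h), det_mul, det_conjTranspose, norm_mul,
      norm_star, norm_det_of_unitary (hQ i), hdet]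
    simp
  · intro i s r s' r'
    simp only [key, kroneckerMap_apply]
    refine ⟨fun h => ?_, fun h => ?_, ?_⟩
    · rw [one_apply_ne h.ne', zero_mul]
    · rw [hT i _ _ h, mul_zero]
    · simp

theorem Good.iter {K n : ℕ} (A : Fin K → Matrix (Fin n) (Fin n) ℂ) (hdet : ∀ i, (A i).det = 1)
    (p : ℕ) : ∀ k, k ≤ K → Good (n := n)
      (fun i => (1 : Matrix (Fin (n ^ k * (p + 1))) (Fin (n ^ k * (p + 1))) ℂ) ⊗ₖ A i) k
      (n ^ k * p + 1) := by
  intro k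
  induction k with
  | zero =>
    intro _
    have := Good.base A hdet (p + 1)
    rw [pow_zero, one_mul, one_mul]
    exact this
  | succ k ih =>
    intro hk
    have h := (ih (by omega)).step (by omega)
    have hN : n ^ (k + 1) * (p + 1) = n * (n ^ k * (p + 1)) := by ring
    have hM : n ^ (k + 1) * p + 1 = n * (n ^ k * p) + 1 := by ring
    rw [hN, hM]
    have h2 := h.reindex ((finProdFinEquiv.symm.prodCongr (Equiv.refl _)).trans
      (Equiv.prodAssoc _ _ _))
    convert h2 using 2 with i
    ext ⟨a, b⟩ ⟨a', b'⟩
    simp only [kroneckerMap_apply, submatrix_apply, Equiv.trans_apply, Equiv.prodCongr_apply,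
      Prod.map_apply, Equiv.prodAssoc_apply, Equiv.refl_apply, ← mul_assoc]
    congr 1
    obtain ⟨x, rfl⟩ := finProdFinEquiv.surjective a
    obtain ⟨y, rfl⟩ := finProdFinEquiv.surjective a'
    simp only [Equiv.symm_apply_apply, Matrix.one_apply, Equiv.apply_eq_iff_eq, Prod.ext_iff]
    by_cases h1 : x.1 = y.1 <;> by_cases h2 : x.2 = y.2 <;> simp [h1, h2]

/-- Nearly-optimal `K`-GMD: for unit-determinant complex `n × n` matrices
`A 1, …, A K` and any `ε > 0`, there are `N`, a dimension `m ≥ (1 - ε) n N`,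
and `nN × m` matrices `U 1, …, U K, V` with orthonormal columns such that every
`(U i)ᴴ * (I_N ⊗ A i) * V` is upper triangular with unit diagonal. -/
theorem nearly_optimal_KGMD (K n : ℕ) (hK : 1 ≤ K) (hn : 1 ≤ n)
    (A : Fin K → Matrix (Fin n) (Fin n) ℂ) (hdet : ∀ i, (A i).det = 1)
    (ε : ℝ) (hε : 0 < ε) :
    ∃ (N m : ℕ), 1 ≤ N ∧ (1 - ε) * (n * N : ℝ) ≤ (m : ℝ) ∧
      ∃ (U : Fin K → Matrix (Fin N × Fin n) (Fin m) ℂ)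
        (V : Matrix (Fin N × Fin n) (Fin m) ℂ),
        (∀ i, (U i)ᴴ * U i = 1) ∧ Vᴴ * V = 1 ∧
        ∀ i : Fin K,
          (∀ k l : Fin m, l < k →
            ((U i)ᴴ * ((1 : Matrix (Fin N) (Fin N) ℂ) ⊗ₖ A i) * V) k l = 0) ∧
          (∀ k : Fin m,
            ((U i)ᴴ * ((1 : Matrix (Fin N) (Fin N) ℂ) ⊗ₖ A i) * V) k k = 1) := by
  obtain ⟨p, hp⟩ := exists_nat_ge (1 / ε)
  rw [div_le_iff₀ hε] at hp
  obtain ⟨U, V, d, hU, hV, -, hd, hT⟩ := Good.iter A hdet p K le_rfl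
  refine ⟨n ^ K * (p + 1), (n ^ K * p + 1) * n, ?_, ?_,
    fun i => (U i).submatrix id finProdFinEquiv.symm, V.submatrix id finProdFinEquiv.symm,
    ?_, ?_, ?_⟩
  · exact Nat.mul_pos (Nat.pow_pos hn) (Nat.succ_pos p)
  · push_cast
    have h1 : (0 : ℝ) ≤ (n : ℝ) ^ K := by positivity
    have h2 : (0 : ℝ) ≤ n := by positivity
    have h3 : (1 - ε) * (p + 1) ≤ (p : ℝ) := by nlinarith
    have h4 := mul_le_mul_of_nonneg_left h3 (mul_nonneg h2 h1)
    nlinarith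
  · intro i
    rw [conjTranspose_submatrix, ← submatrix_mul _ _ _ _ _ Function.bijective_id, hU,
      submatrix_one_equiv]
  · rw [conjTranspose_submatrix, ← submatrix_mul _ _ _ _ _ Function.bijective_id, hV,
      submatrix_one_equiv]
  · intro i
    have key : ((U i).submatrix id finProdFinEquiv.symm)ᴴ *
        ((1 : Matrix (Fin (n ^ K * (p + 1))) (Fin (n ^ K * (p + 1))) ℂ) ⊗ₖ A i) *
        V.submatrix id finProdFinEquiv.symm =
        ((U i)ᴴ * ((1 : Matrix (Fin (n ^ K * (p + 1))) (Fin (n ^ K * (p + 1))) ℂ) ⊗ₖ A i)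
          * V).submatrix finProdFinEquiv.symm finProdFinEquiv.symm := by
      rw [submatrix_mul _ _ _ id _ Function.bijective_id,
        submatrix_mul _ _ _ id _ Function.bijective_id, submatrix_id_id]
      rfl
    simp only [key, submatrix_apply]
    constructor
    · intro x y hxy
      obtain ⟨⟨s, r⟩, rfl⟩ := finProdFinEquiv.surjective x
      obtain ⟨⟨s', r'⟩, rfl⟩ := finProdFinEquiv.surjective y
      simp only [Equiv.symm_apply_apply]
      rw [Fin.lt_def] at hxy
      simp only [finProdFinEquiv_apply_val] at hxy
      rcases lt_trichotomy s' s with hb | hb | hb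
      · exact (hT i s r s' r').1 hb
      · subst hb
        refine (hT i s' r s' r').2.1 ?_
        rw [Fin.lt_def]; omega
      · exfalso
        have : n * (s.val + 1) ≤ n * s'.val := Nat.mul_le_mul_left _ hb
        rw [Nat.mul_add] at this
        have := r.2
        omega
    · intro x
      obtain ⟨⟨s, r⟩, rfl⟩ := finProdFinEquiv.surjective x
      simp only [Equiv.symm_apply_apply]
      rw [(hT i s r s r).2.2, hd i i.2]
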